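/- arXiv:2507.03692 — 3 statements merged into one kernel-verified Lean document; each statement's English description precedes it below -/
import Mathlib

section
/- Let k ≥ 1, let ε ≥ 0, and let D0 and D1 be probability distributions on {0,1}^n that are ε-almost k-wise equal. Then for every adaptive k-query strategy on {0,1}^n with transcript map Z, and for every string z ∈ {0,1}^k, one has (1 − ε)·Pr_{x∼D1}[Z(x) = z] ≤ Pr_{x∼D0}[Z(x) = z] ≤ (1 + ε)·Pr_{x∼D1}[Z(x) = z]. -/
/-- The real value of a bit. -/
def bval (b : Bool) : ℝ := if b then 1 else 0

/-- `D` is a probability distribution on `{0,1}^n`. -/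
def IsDistribution {n : ℕ} (D : (Fin n → Bool) → ℝ) : Prop :=
  (∀ x, 0 ≤ D x) ∧ ∑ x, D x = 1

/-- Expectation of `g` under the distribution `D`. -/
def expect {n : ℕ} (D : (Fin n → Bool) → ℝ) (g : (Fin n → Bool) → ℝ) : ℝ :=
  ∑ x, D x * g x

/-- A `k`-term is described by a list of `k` pairs `(i, b)`; the factor corresponding
to `(i, true)` is `z i` and the one corresponding to `(i, false)` is `1 - z i`.
On Boolean inputs, each factor is the indicator that `z i = b`. -/
def termEval {n : ℕ} (L : List (Fin n × Bool)) (z : Fin n → Bool) : ℝ :=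
  (L.map (fun p => if z p.1 = p.2 then (1 : ℝ) else 0)).prod

/-- `D0` and `D1` are `ε`-almost `k`-wise equal:
for every `k`-term `C`, `(1 - ε) E_{D1}[C] ≤ E_{D0}[C] ≤ (1 + ε) E_{D1}[C]`. -/
def AlmostKWiseEqual {n : ℕ} (k : ℕ) (ε : ℝ) (D0 D1 : (Fin n → Bool) → ℝ) : Prop :=
  ∀ L : List (Fin n × Bool), L.length = k →
    (1 - ε) * expect D1 (termEval L) ≤ expect D0 (termEval L) ∧
    expect D0 (termEval L) ≤ (1 + ε) * expect D1 (termEval L)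

/-- `Z` is the transcript map of the adaptive `k`-query strategy `q`:
`Z x j = x (q j (Z x ↾ {0,…,j-1}))`. -/
def IsTranscript {n k : ℕ} (q : (j : Fin k) → (Fin j → Bool) → Fin n)
    (Z : (Fin n → Bool) → Fin k → Bool) : Prop :=
  ∀ x j, Z x j = x (q j (fun i => Z x ⟨i.1, i.2.trans j.2⟩))

/-!
For a fixed string `z`, the queries a strategy makes while its answers agree with `z` do not depend
on the input. Hence the event that the transcript equals `z` says only that these `k` fixed
coordinates of the input have the values prescribed by `z`, so its indicator is a single `k`-term.
-/

theorem eq_of_forall_eq_prefix {α : Type*} {k : ℕ} (f : (j : Fin k) → (Fin j → α) → α)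
    {u v : Fin k → α} (hu : ∀ j, u j = f j fun i => u ⟨i, i.2.trans j.2⟩)
    (hv : ∀ j, v j = f j fun i => v ⟨i, i.2.trans j.2⟩) : u = v := by
  funext j
  induction j using WellFoundedLT.induction with
  | ind j ih =>
    have prefix_eq (i : Fin j) : u ⟨i, i.2.trans j.2⟩ = v ⟨i, i.2.trans j.2⟩ :=
      ih ⟨i, i.2.trans j.2⟩ i.2
    rw [hu, hv, funext prefix_eq]

theorem termEval_eq_ite {n : ℕ} (L : List (Fin n × Bool)) (x : Fin n → Bool) :
    termEval L x = if ∀ p ∈ L, x p.1 = p.2 then 1 else 0 := by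
  induction L with
  | nil => simp [termEval]
  | cons p L ih =>
    rw [termEval] at ih ⊢
    simp only [List.map_cons, List.prod_cons, ih, List.forall_mem_cons, ite_and, ite_mul, one_mul,
      zero_mul]

section Transcript

variable {n k : ℕ} {q : (j : Fin k) → (Fin j → Bool) → Fin n} {Z : (Fin n → Bool) → Fin k → Bool}

theorem IsTranscript.eq_iff (hZ : IsTranscript q Z) {x : Fin n → Bool} {z : Fin k → Bool} :
    Z x = z ↔ ∀ j, x (q j fun i => z ⟨i, i.2.trans j.2⟩) = z j := by
  constructor
  · rintro rfl j
    exact (hZ x j).symm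
  · intro hz
    exact eq_of_forall_eq_prefix (fun j w => x (q j w)) (hZ x) fun j => (hz j).symm

/-- The `k`-term that describes the run of the strategy `q` with answers `z`: its `j`-th factor
compares `z j` with the coordinate that `q` queries after the answers `z 0, …, z (j - 1)`. -/
def transcriptTerm (q : (j : Fin k) → (Fin j → Bool) → Fin n) (z : Fin k → Bool) :
    List (Fin n × Bool) :=
  List.ofFn fun j => (q j fun i => z ⟨i, i.2.trans j.2⟩, z j)

theorem length_transcriptTerm (q : (j : Fin k) → (Fin j → Bool) → Fin n) (z : Fin k → Bool) :
    (transcriptTerm q z).length = k :=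
  List.length_ofFn

theorem IsTranscript.termEval_transcriptTerm (hZ : IsTranscript q Z) (z : Fin k → Bool) :
    termEval (transcriptTerm q z) = fun x => if Z x = z then 1 else 0 := by
  funext x
  simp only [termEval_eq_ite, transcriptTerm, List.forall_mem_ofFn_iff, hZ.eq_iff]

theorem almost_kwise_transcript_bound_general {ε : ℝ} {D0 D1 : (Fin n → Bool) → ℝ}
    (hD : AlmostKWiseEqual k ε D0 D1) (hZ : IsTranscript q Z) (z : Fin k → Bool) :
    (1 - ε) * expect D1 (fun x => if Z x = z then 1 else 0) ≤
        expect D0 (fun x => if Z x = z then 1 else 0) ∧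
      expect D0 (fun x => if Z x = z then 1 else 0) ≤
        (1 + ε) * expect D1 (fun x => if Z x = z then 1 else 0) := by
  rw [← hZ.termEval_transcriptTerm z]
  exact hD (transcriptTerm q z) (length_transcriptTerm q z)

end Transcript

/-- If `D0, D1` are `ε`-almost `k`-wise equal, then for every adaptive
`k`-query strategy with transcript map `Z` and every `z ∈ {0,1}^k`,
`(1-ε)·Pr_{x∼D1}[Z x = z] ≤ Pr_{x∼D0}[Z x = z] ≤ (1+ε)·Pr_{x∼D1}[Z x = z]`. -/
theorem almost_kwise_transcript_bound {n k : ℕ} (hk : 1 ≤ k) (ε : ℝ) (hε : 0 ≤ ε)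
    (D0 D1 : (Fin n → Bool) → ℝ)
    (hD0 : IsDistribution D0) (hD1 : IsDistribution D1)
    (hD : AlmostKWiseEqual k ε D0 D1)
    (q : (j : Fin k) → (Fin j → Bool) → Fin n)
    (Z : (Fin n → Bool) → Fin k → Bool) (hZ : IsTranscript q Z)
    (z : Fin k → Bool) :
    (1 - ε) * (∑ x, D1 x * (if Z x = z then 1 else 0)) ≤
      (∑ x, D0 x * (if Z x = z then 1 else 0)) ∧
    (∑ x, D0 x * (if Z x = z then 1 else 0)) ≤
      (1 + ε) * (∑ x, D1 x * (if Z x = z then 1 else 0)) :=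
  almost_kwise_transcript_bound_general hD hZ z
end

section
/- For every function f : {0,1}^n → {0,1}, every natural number d, and every δ ∈ [0, 1/2), the rational tree degree of the adaptive construction satisfies rtdeg_{(d+1)δ}(Ada(f, d)) ≤ (d + 1) · rdeg_δ(f). -/
/-- Evaluation of a real multivariate polynomial at a Boolean point. -/
noncomputable def evalB {m : ℕ} (P : MvPolynomial (Fin m) ℝ) (x : Fin m → Bool) : ℝ :=
  MvPolynomial.eval (fun i => bval (x i)) P

/-- Clamp a real number to `[0,1]`. -/
noncomputable def clamp (r : ℝ) : ℝ := max 0 (min 1 r)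

/-- The rational function `P/Q` (with `Q` nonvanishing on the Boolean cube)
`ε`-approximates `f`. -/
def IsRationalApprox {m : ℕ} (ε : ℝ) (f : (Fin m → Bool) → Bool)
    (P Q : MvPolynomial (Fin m) ℝ) : Prop :=
  (∀ x, evalB Q x ≠ 0) ∧ ∀ x, |evalB P x / evalB Q x - bval (f x)| ≤ ε

/-- The rational degree `rdeg_ε(f)`: the minimum of `max(deg P, deg Q)` over rational
functions `P/Q` that `ε`-approximate `f`. -/
noncomputable def rdeg {m : ℕ} (ε : ℝ) (f : (Fin m → Bool) → Bool) : ℕ :=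
  sInf {d | ∃ P Q : MvPolynomial (Fin m) ℝ,
    IsRationalApprox ε f P Q ∧ max P.totalDegree Q.totalDegree ≤ d}

/-- A rational tree: a finite binary tree each of whose nodes is labeled by a rational
function `P/Q` on `{0,1}^m`. -/
inductive RTree (m : ℕ) where
  | leaf (P Q : MvPolynomial (Fin m) ℝ) : RTree m
  | node (P Q : MvPolynomial (Fin m) ℝ) (t0 t1 : RTree m) : RTree m

namespace RTree

/-- All denominators in the tree are nonvanishing on the Boolean cube. -/
def Valid {m : ℕ} : RTree m → Prop
  | leaf _ Q => ∀ x, evalB Q x ≠ 0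
  | node _ Q t0 t1 => (∀ x, evalB Q x ≠ 0) ∧ t0.Valid ∧ t1.Valid

/-- `T.prob x`: the probability that evaluating the rational tree `T` on input `x`
outputs `1`.  At each node one flips a coin with bias the clamped value of the label;
at a leaf the coin value is output, otherwise one moves to the child indexed by it. -/
noncomputable def prob {m : ℕ} : RTree m → (Fin m → Bool) → ℝ
  | leaf P Q, x => clamp (evalB P x / evalB Q x)
  | node P Q t0 t1, x =>
      (1 - clamp (evalB P x / evalB Q x)) * t0.prob x
        + clamp (evalB P x / evalB Q x) * t1.prob x

/-- The degree of a rational tree: the maximum over root-to-leaf paths of the sum of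
the degrees of the labels along the path. -/
def deg {m : ℕ} : RTree m → ℕ
  | leaf P Q => max P.totalDegree Q.totalDegree
  | node P Q t0 t1 => max P.totalDegree Q.totalDegree + max t0.deg t1.deg

end RTree

/-- The rational tree degree `rtdeg_ε(f)`: the minimum degree of a (valid) rational tree
`ε`-approximating `f`. -/
noncomputable def rtdeg {m : ℕ} (ε : ℝ) (f : (Fin m → Bool) → Bool) : ℕ :=
  sInf {d | ∃ T : RTree m, T.Valid ∧ (∀ x, |T.prob x - bval (f x)| ≤ ε) ∧ T.deg ≤ d}

lemma adaSize_succ (n d : ℕ) :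
    n * (2 ^ (d + 1 + 1) - 1) = n + (n * (2 ^ (d + 1) - 1) + n * (2 ^ (d + 1) - 1)) := by
  obtain ⟨p, hp⟩ : ∃ p, 2 ^ (d + 1) = p + 1 :=
    ⟨2 ^ (d + 1) - 1, by have := Nat.one_le_two_pow (n := d + 1); omega⟩
  have h2 : 2 ^ (d + 1 + 1) = 2 * (p + 1) := by rw [pow_succ, hp]; ring
  rw [h2, hp]
  have h3 : 2 * (p + 1) - 1 = 2 * p + 1 := by omega
  have h4 : p + 1 - 1 = p := by omega
  rw [h3, h4]; ring

/-- The adaptive construction `Ada(f, d)`, a Boolean function on `n·(2^{d+1} - 1)` bits: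
`Ada(f,0) = f` and `Ada(f,d)(x,y,z) = Ada(f,d-1)(y)` if `f x = 0`, `= Ada(f,d-1)(z)` if
`f x = 1`. -/
def ada {n : ℕ} (f : (Fin n → Bool) → Bool) :
    (d : ℕ) → (Fin (n * (2 ^ (d + 1) - 1)) → Bool) → Bool
  | 0 => fun w => f (fun i => w ⟨i.1, by simp⟩)
  | d + 1 => fun w =>
      if f (fun i => w ⟨i.1, by have := adaSize_succ n d; have := i.2; omega⟩)
      then ada f d (fun j =>
        w ⟨n + n * (2 ^ (d + 1) - 1) + j.1, by have := adaSize_succ n d; have := j.2; omega⟩)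
      else ada f d (fun j =>
        w ⟨n + j.1, by have := adaSize_succ n d; have := j.2; omega⟩)

/-- The `n`-bit AND function. -/
def ANDb (n : ℕ) : (Fin n → Bool) → Bool := fun x => decide (∀ i, x i = true)

section Clamp

lemma clamp_mem_Icc (r : ℝ) : clamp r ∈ Set.Icc (0 : ℝ) 1 :=
  ⟨le_max_left _ _, max_le zero_le_one (min_le_left _ _)⟩

lemma clamp_bval (b : Bool) : clamp (bval b) = bval b := by
  cases b <;> simp [clamp, bval]

lemma abs_clamp_sub_clamp_le (r s : ℝ) : |clamp r - clamp s| ≤ |r - s| :=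
  calc |clamp r - clamp s|
      ≤ |min 1 r - min 1 s| := by
        simpa only [clamp, max_comm] using abs_max_sub_max_le_abs (min 1 r) (min 1 s) 0
    _ ≤ |r - s| := by
        simpa only [sub_self, abs_zero, max_eq_right (abs_nonneg (r - s))] using
          abs_min_sub_min_le_max 1 r 1 s

lemma abs_clamp_sub_bval_le (r : ℝ) (b : Bool) : |clamp r - bval b| ≤ |r - bval b| := by
  simpa only [clamp_bval] using abs_clamp_sub_clamp_le r (bval b)

end Clamp

lemma abs_mix_sub_bval_ite_le {p a₀ a₁ δ ε : ℝ} {b c₀ c₁ : Bool}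
    (hp : |p - bval b| ≤ δ) (ha : |a₁ - a₀| ≤ 1)
    (h₀ : |a₀ - bval c₀| ≤ ε) (h₁ : |a₁ - bval c₁| ≤ ε) :
    |(1 - p) * a₀ + p * a₁ - bval (if b then c₁ else c₀)| ≤ δ + ε := by
  have error_of_exact_branching :
      |(1 - bval b) * a₀ + bval b * a₁ - bval (if b then c₁ else c₀)| ≤ ε := by
    cases b <;> simpa [bval]
  calc |(1 - p) * a₀ + p * a₁ - bval (if b then c₁ else c₀)|
      = |(p - bval b) * (a₁ - a₀)
          + ((1 - bval b) * a₀ + bval b * a₁ - bval (if b then c₁ else c₀))| := by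
        congr 1
        ring
    _ ≤ |p - bval b| * |a₁ - a₀|
          + |(1 - bval b) * a₀ + bval b * a₁ - bval (if b then c₁ else c₀)| := by
        rw [← abs_mul]
        exact abs_add_le _ _
    _ ≤ δ * 1 + ε := by gcongr; exact (abs_nonneg _).trans hp
    _ = δ + ε := by rw [mul_one]

section Evaluation

variable {m k : ℕ}

lemma evalB_rename (g : Fin m → Fin k) (P : MvPolynomial (Fin m) ℝ) (x : Fin k → Bool) :
    evalB (MvPolynomial.rename g P) x = evalB P (x ∘ g) :=
  MvPolynomial.eval_rename g _ P

/-- The multilinear polynomial that is `1` at the point `y` of the Boolean cube and `0` at every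
other point of it, used for interpolation. -/
noncomputable def cubeIndicator (y : Fin m → Bool) : MvPolynomial (Fin m) ℝ :=
  ∏ i, if y i then MvPolynomial.X i else 1 - MvPolynomial.X i

lemma evalB_cubeIndicator (y x : Fin m → Bool) :
    evalB (cubeIndicator y) x = if x = y then 1 else 0 := by
  have eval_factor (i : Fin m) :
      MvPolynomial.eval (fun j => bval (x j))
        (if y i then MvPolynomial.X i else 1 - MvPolynomial.X i) = if x i = y i then 1 else 0 := by
    cases hx : x i <;> cases y i <;> simp [hx, bval]
  simp only [evalB, cubeIndicator, map_prod, eval_factor, Finset.prod_ite_zero,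
    Finset.prod_const_one, Finset.mem_univ, forall_const, funext_iff]

lemma exists_evalB_eq (F : (Fin m → Bool) → ℝ) :
    ∃ P : MvPolynomial (Fin m) ℝ, ∀ x, evalB P x = F x := by
  refine ⟨∑ y, MvPolynomial.C (F y) * cubeIndicator y, fun x => ?_⟩
  calc evalB (∑ y, MvPolynomial.C (F y) * cubeIndicator y) x
      = ∑ y, F y * evalB (cubeIndicator y) x := by
        simp only [evalB, map_sum, map_mul, MvPolynomial.eval_C]
    _ = F x := by
        simp only [evalB_cubeIndicator, mul_boole, Finset.sum_ite_eq, Finset.mem_univ, if_true]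

end Evaluation

section RationalDegree

variable {m : ℕ} {δ : ℝ}

lemma exists_isRationalApprox (hδ : 0 ≤ δ) (f : (Fin m → Bool) → Bool) :
    ∃ P Q, IsRationalApprox δ f P Q := by
  obtain ⟨P, hP⟩ := exists_evalB_eq fun x => bval (f x)
  have eval_one (x : Fin m → Bool) : evalB 1 x = 1 := map_one _
  refine ⟨P, 1, fun x => ?_, fun x => ?_⟩
  · rw [eval_one]
    exact one_ne_zero
  · rwa [hP, eval_one, div_one, sub_self, abs_zero]

lemma exists_isRationalApprox_degree_le_rdeg (hδ : 0 ≤ δ) (f : (Fin m → Bool) → Bool) :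
    ∃ P Q, IsRationalApprox δ f P Q ∧ max P.totalDegree Q.totalDegree ≤ rdeg δ f := by
  obtain ⟨P, Q, hPQ⟩ := exists_isRationalApprox hδ f
  have attainable : {d | ∃ P Q : MvPolynomial (Fin m) ℝ,
      IsRationalApprox δ f P Q ∧ max P.totalDegree Q.totalDegree ≤ d}.Nonempty :=
    ⟨_, P, Q, hPQ, le_rfl⟩
  exact Nat.sInf_mem attainable

end RationalDegree

namespace RTree

variable {m k : ℕ} {δ ε : ℝ}

lemma prob_mem_Icc (T : RTree m) (x : Fin m → Bool) : T.prob x ∈ Set.Icc (0 : ℝ) 1 := by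
  induction T with
  | leaf P Q => exact clamp_mem_Icc _
  | node P Q t₀ t₁ ih₀ ih₁ =>
    obtain ⟨bias_nonneg, bias_le_one⟩ := clamp_mem_Icc (evalB P x / evalB Q x)
    exact convex_Icc 0 1 ih₀ ih₁ (sub_nonneg.2 bias_le_one) bias_nonneg (sub_add_cancel _ _)

section Rename

/-- The tree obtained by substituting the variable `g i` for the variable `i` in every label,
which makes a tree read only a block of a longer input. -/
noncomputable def rename (g : Fin m → Fin k) : RTree m → RTree k
  | leaf P Q => leaf (MvPolynomial.rename g P) (MvPolynomial.rename g Q)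
  | node P Q t₀ t₁ =>
      node (MvPolynomial.rename g P) (MvPolynomial.rename g Q) (t₀.rename g) (t₁.rename g)

variable (g : Fin m → Fin k)

lemma Valid.rename {T : RTree m} (hT : T.Valid) : (T.rename g).Valid := by
  induction T with
  | leaf P Q => exact fun x => by simpa only [evalB_rename] using hT (x ∘ g)
  | node P Q t₀ t₁ ih₀ ih₁ =>
    exact ⟨fun x => by simpa only [evalB_rename] using hT.1 (x ∘ g), ih₀ hT.2.1, ih₁ hT.2.2⟩

lemma prob_rename (T : RTree m) (x : Fin k → Bool) :
    (T.rename g).prob x = T.prob (x ∘ g) := by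
  induction T with
  | leaf P Q => simp only [rename, prob, evalB_rename]
  | node P Q t₀ t₁ ih₀ ih₁ => simp only [rename, prob, evalB_rename, ih₀, ih₁]

lemma deg_rename_le (T : RTree m) : (T.rename g).deg ≤ T.deg := by
  induction T with
  | leaf P Q =>
    simp only [rename, deg]
    gcongr <;> exact MvPolynomial.totalDegree_rename_le _ _
  | node P Q t₀ t₁ ih₀ ih₁ =>
    simp only [rename, deg]
    gcongr <;> exact MvPolynomial.totalDegree_rename_le _ _

end Rename

section Branch

/-- The tree that runs `T` and then `T₀` or `T₁` according to the output of `T`. -/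
def branch (T T₀ T₁ : RTree m) : RTree m :=
  match T with
  | leaf P Q => node P Q T₀ T₁
  | node P Q t₀ t₁ => node P Q (t₀.branch T₀ T₁) (t₁.branch T₀ T₁)

variable {T T₀ T₁ : RTree m}

lemma Valid.branch (hT : T.Valid) (h₀ : T₀.Valid) (h₁ : T₁.Valid) :
    (T.branch T₀ T₁).Valid := by
  induction T with
  | leaf P Q => exact ⟨hT, h₀, h₁⟩
  | node P Q t₀ t₁ ih₀ ih₁ => exact ⟨hT.1, ih₀ hT.2.1, ih₁ hT.2.2⟩

variable (T T₀ T₁)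

lemma prob_branch (x : Fin m → Bool) :
    (T.branch T₀ T₁).prob x = (1 - T.prob x) * T₀.prob x + T.prob x * T₁.prob x := by
  induction T with
  | leaf P Q => rfl
  | node P Q t₀ t₁ ih₀ ih₁ =>
    simp only [branch, prob, ih₀, ih₁]
    ring

lemma deg_branch : (T.branch T₀ T₁).deg = T.deg + max T₀.deg T₁.deg := by
  induction T with
  | leaf P Q => rfl
  | node P Q t₀ t₁ ih₀ ih₁ =>
    simp only [branch, deg, ih₀, ih₁, max_add_add_right, add_assoc]

end Branch

section Approximation

/-- `T` is a rational tree that `ε`-approximates `f`; `rtdeg ε f` is the minimum degree of such a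
tree. Validity is included because `RTree` itself allows vanishing denominators. -/
def IsApprox (ε : ℝ) (f : (Fin m → Bool) → Bool) (T : RTree m) : Prop :=
  T.Valid ∧ ∀ x, |T.prob x - bval (f x)| ≤ ε

variable {f g₀ g₁ : (Fin m → Bool) → Bool} {T T₀ T₁ : RTree m}

lemma isApprox_leaf {P Q : MvPolynomial (Fin m) ℝ}
    (h : IsRationalApprox ε f P Q) : (leaf P Q).IsApprox ε f :=
  ⟨h.1, fun x => (abs_clamp_sub_bval_le _ _).trans (h.2 x)⟩

lemma IsApprox.rename (hT : T.IsApprox ε f) (g : Fin m → Fin k) :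
    (T.rename g).IsApprox ε (fun x => f (x ∘ g)) :=
  ⟨hT.1.rename g, fun x => by simpa only [prob_rename] using hT.2 (x ∘ g)⟩

lemma IsApprox.branch (hT : T.IsApprox δ f) (h₀ : T₀.IsApprox ε g₀) (h₁ : T₁.IsApprox ε g₁) :
    (T.branch T₀ T₁).IsApprox (δ + ε) (fun x => if f x then g₁ x else g₀ x) := by
  refine ⟨hT.1.branch h₀.1 h₁.1, fun x => ?_⟩
  rw [prob_branch]
  exact abs_mix_sub_bval_ite_le (hT.2 x)
    (Real.dist_le_of_mem_Icc_01 (T₁.prob_mem_Icc x) (T₀.prob_mem_Icc x)) (h₀.2 x) (h₁.2 x)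

lemma IsApprox.rtdeg_le (hT : T.IsApprox ε f) : rtdeg ε f ≤ T.deg :=
  Nat.sInf_le ⟨T, hT.1, hT.2, le_rfl⟩

end Approximation

end RTree

section RationalTreeDegree

variable {m k : ℕ} {δ ε : ℝ}

lemma exists_isApprox_deg_le_rtdeg (hε : 0 ≤ ε) (f : (Fin m → Bool) → Bool) :
    ∃ T : RTree m, T.IsApprox ε f ∧ T.deg ≤ rtdeg ε f := by
  obtain ⟨P, Q, hPQ⟩ := exists_isRationalApprox hε f
  have hleaf := RTree.isApprox_leaf hPQ
  have attainable : {d | ∃ T : RTree m,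
      T.Valid ∧ (∀ x, |T.prob x - bval (f x)| ≤ ε) ∧ T.deg ≤ d}.Nonempty :=
    ⟨_, RTree.leaf P Q, hleaf.1, hleaf.2, le_rfl⟩
  obtain ⟨T, hvalid, herr, hdeg⟩ := Nat.sInf_mem attainable
  exact ⟨T, ⟨hvalid, herr⟩, hdeg⟩

lemma rtdeg_le_rdeg (hδ : 0 ≤ δ) (f : (Fin m → Bool) → Bool) : rtdeg δ f ≤ rdeg δ f := by
  obtain ⟨P, Q, hPQ, hdeg⟩ := exists_isRationalApprox_degree_le_rdeg hδ f
  exact (RTree.isApprox_leaf hPQ).rtdeg_le.trans hdeg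

lemma rtdeg_comp_le (hε : 0 ≤ ε) (f : (Fin m → Bool) → Bool) (g : Fin m → Fin k) :
    rtdeg ε (fun x => f (x ∘ g)) ≤ rtdeg ε f := by
  obtain ⟨T, hT, hdeg⟩ := exists_isApprox_deg_le_rtdeg hε f
  exact (hT.rename g).rtdeg_le.trans ((T.deg_rename_le g).trans hdeg)

lemma rtdeg_ite_le (hδ : 0 ≤ δ) (hε : 0 ≤ ε) (f g₀ g₁ : (Fin m → Bool) → Bool) :
    rtdeg (δ + ε) (fun x => if f x then g₁ x else g₀ x) ≤
      rtdeg δ f + max (rtdeg ε g₀) (rtdeg ε g₁) := by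
  obtain ⟨T, hT, hdeg⟩ := exists_isApprox_deg_le_rtdeg hδ f
  obtain ⟨T₀, hT₀, hdeg₀⟩ := exists_isApprox_deg_le_rtdeg hε g₀
  obtain ⟨T₁, hT₁, hdeg₁⟩ := exists_isApprox_deg_le_rtdeg hε g₁
  calc rtdeg (δ + ε) (fun x => if f x then g₁ x else g₀ x)
      ≤ (T.branch T₀ T₁).deg := (hT.branch hT₀ hT₁).rtdeg_le
    _ = T.deg + max T₀.deg T₁.deg := T.deg_branch T₀ T₁
    _ ≤ rtdeg δ f + max (rtdeg ε g₀) (rtdeg ε g₁) := by gcongr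

end RationalTreeDegree

section Ada

variable {n : ℕ} (f : (Fin n → Bool) → Bool) (d : ℕ)

lemma ada_zero : ada f 0 = fun w => f (w ∘ Fin.cast (by simp)) := rfl

lemma ada_succ :
    ada f (d + 1) = fun w =>
      if f (w ∘ Fin.cast (adaSize_succ n d).symm ∘ Fin.castAdd _)
      then ada f d (w ∘ Fin.cast (adaSize_succ n d).symm ∘ Fin.natAdd n ∘ Fin.natAdd _)
      else ada f d (w ∘ Fin.cast (adaSize_succ n d).symm ∘ Fin.natAdd n ∘ Fin.castAdd _) := by
  funext w
  have third_block (j : Fin (n * (2 ^ (d + 1) - 1))) :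
      Fin.cast (adaSize_succ n d).symm (Fin.natAdd n (Fin.natAdd _ j)) =
        ⟨n + n * (2 ^ (d + 1) - 1) + j, by have := adaSize_succ n d; omega⟩ :=
    Fin.ext (add_assoc _ _ _).symm
  simp only [ada, Function.comp_def, third_block]
  rfl

theorem rtdeg_ada_le_general {δ : ℝ} (hδ : 0 ≤ δ) :
    rtdeg (((d : ℝ) + 1) * δ) (ada f d) ≤ (d + 1) * rtdeg δ f := by
  induction d with
  | zero =>
    simpa only [ada_zero, Nat.cast_zero, zero_add, one_mul] using rtdeg_comp_le hδ f _
  | succ d ih =>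
    set ε : ℝ := ((d : ℝ) + 1) * δ
    have hε : 0 ≤ ε := by positivity
    have error_eq : (((d + 1 : ℕ) : ℝ) + 1) * δ = δ + ε := by
      push_cast
      ring
    rw [ada_succ, error_eq]
    refine (rtdeg_ite_le hδ hε _ _ _).trans ?_
    calc _ ≤ rtdeg δ f + max (rtdeg ε (ada f d)) (rtdeg ε (ada f d)) :=
          add_le_add (rtdeg_comp_le hδ f _)
            (max_le_max (rtdeg_comp_le hε _ _) (rtdeg_comp_le hε _ _))
      _ = rtdeg δ f + rtdeg ε (ada f d) := by rw [max_self]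
      _ ≤ rtdeg δ f + (d + 1) * rtdeg δ f := by gcongr
      _ = (d + 1 + 1) * rtdeg δ f := by ring

end Ada

/-- For every `f : {0,1}^n → {0,1}`, depth `d`, and `δ ∈ [0, 1/2)`,
`rtdeg_{(d+1)δ}(Ada(f, d)) ≤ (d+1) · rdeg_δ(f)`. -/
theorem rtdeg_ada_le {n : ℕ} (f : (Fin n → Bool) → Bool) (d : ℕ) (δ : ℝ)
    (hδ0 : 0 ≤ δ) (hδ : δ < 1/2) :
    rtdeg (((d : ℝ) + 1) * δ) (ada f d) ≤ (d + 1) * rdeg δ f :=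
  (rtdeg_ada_le_general f d hδ0).trans (Nat.mul_le_mul_left _ (rtdeg_le_rdeg hδ0 f))
end

section
/- There is a constant C such that for every n ≥ 2 and every δ ∈ (0, 1/2), the rational degree of the n-bit AND function satisfies rdeg_δ(AND_n) ≤ C · (log n)² · log(1/δ). -/
/-!
If a polynomial `S ≥ 0` on the cube vanishes exactly where `f` is true, then `t / (t + S)` equals
`1` where `f` is true and tends to `0` elsewhere as `t → 0⁺`. The cube being finite, a small `t`
gives accuracy `ε` everywhere, at degree `deg S` whatever `ε` is. For the AND function, `S` can be
the number of zero bits, which is affine; so its rational degree is at most `1`, while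
`(log n)² log (1/δ)` is bounded below by `(log 2)³`.
-/

open Filter MvPolynomial Topology

section RationalApprox

variable {m : ℕ} {ε : ℝ} {f : (Fin m → Bool) → Bool}

lemma IsRationalApprox.rdeg_le {P Q : MvPolynomial (Fin m) ℝ} (h : IsRationalApprox ε f P Q) :
    rdeg ε f ≤ max P.totalDegree Q.totalDegree :=
  Nat.sInf_le ⟨P, Q, h, le_rfl⟩

variable {S : MvPolynomial (Fin m) ℝ}

lemma isRationalApprox_C_C_add {t : ℝ} (ht : 0 < t) (hε : 0 ≤ ε) (hS : ∀ x, 0 ≤ evalB S x)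
    (hzero : ∀ x, f x = true → evalB S x = 0)
    (hlarge : ∀ x, f x = false → t ≤ ε * (t + evalB S x)) :
    IsRationalApprox ε f (C t) (C t + S) := by
  have eval_num (x : Fin m → Bool) : evalB (C t) x = t := by simp [evalB]
  have eval_den (x : Fin m → Bool) : evalB (C t + S) x = t + evalB S x := by simp [evalB]
  have den_pos (x : Fin m → Bool) : 0 < t + evalB S x := add_pos_of_pos_of_nonneg ht (hS x)
  refine ⟨fun x => (eval_den x).trans_ne (den_pos x).ne', fun x => ?_⟩
  rw [eval_num, eval_den]
  cases hx : f x with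
  | true => simpa [bval, hzero x hx, ht.ne'] using hε
  | false =>
    have quotient_nonneg : 0 ≤ t / (t + evalB S x) := div_nonneg ht.le (den_pos x).le
    simpa [bval, abs_of_nonneg quotient_nonneg, div_le_iff₀ (den_pos x)] using hlarge x hx

theorem rdeg_le_totalDegree_of_nonneg (hε : 0 < ε) (hS : ∀ x, 0 ≤ evalB S x)
    (hf : ∀ x, f x = true ↔ evalB S x = 0) : rdeg ε f ≤ S.totalDegree := by
  have eventually_small :
      ∀ᶠ t in 𝓝[>] (0 : ℝ), ∀ x, f x = false → t ≤ ε * evalB S x := by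
    refine eventually_all.2 fun x => eventually_imp_distrib_left.2 fun hx => ?_
    have S_pos : 0 < evalB S x := (hS x).lt_of_ne' fun h => by simp [(hf x).2 h] at hx
    exact nhdsWithin_le_nhds (eventually_le_nhds (mul_pos hε S_pos))
  obtain ⟨t, t_small, ht⟩ := (eventually_small.and self_mem_nhdsWithin).exists
  have approx : IsRationalApprox ε f (C t) (C t + S) :=
    isRationalApprox_C_C_add ht hε.le hS (fun x => (hf x).1)
      (fun x hx => (t_small x hx).trans (by gcongr; exact le_add_of_nonneg_left ht.le))
  calc rdeg ε f ≤ max (C t).totalDegree (C t + S).totalDegree := approx.rdeg_le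
    _ ≤ S.totalDegree := max_le (by simp) ((totalDegree_add _ _).trans (by simp))

end RationalApprox

/-- The affine polynomial counting the zero bits of a point of the cube `{0,1}^n`; on the cube it
is nonnegative, with the all-ones point as its only zero. -/
noncomputable def zeroCount (n : ℕ) : MvPolynomial (Fin n) ℝ :=
  ∑ i, (1 - X i)

lemma evalB_zeroCount {n : ℕ} (x : Fin n → Bool) :
    evalB (zeroCount n) x = Finset.card {i | x i = false} := by
  have one_sub_bval (b : Bool) : 1 - bval b = if b = false then 1 else 0 := by
    cases b <;> simp [bval]
  simp only [zeroCount, evalB, map_sum, map_sub, map_one, eval_X, one_sub_bval, Finset.sum_boole]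

lemma totalDegree_zeroCount_le (n : ℕ) : (zeroCount n).totalDegree ≤ 1 :=
  totalDegree_finsetSum_le fun _ _ => (totalDegree_sub _ _).trans (by simp)

lemma ANDb_eq_true_iff_evalB_zeroCount {n : ℕ} (x : Fin n → Bool) :
    ANDb n x = true ↔ evalB (zeroCount n) x = 0 := by
  simp [ANDb, evalB_zeroCount, Finset.filter_eq_empty_iff]

theorem rdeg_AND_le_general (n : ℕ) {ε : ℝ} (hε : 0 < ε) : rdeg ε (ANDb n) ≤ 1 :=
  (rdeg_le_totalDegree_of_nonneg hε (fun x => by simp [evalB_zeroCount])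
    ANDb_eq_true_iff_evalB_zeroCount).trans (totalDegree_zeroCount_le n)

lemma one_le_inv_log_two_pow_three_mul {x y : ℝ} (hx : 2 ≤ x) (hy : 2 ≤ y) :
    1 ≤ (Real.log 2 ^ 3)⁻¹ * Real.log x ^ 2 * Real.log y :=
  calc 1 = (Real.log 2 ^ 3)⁻¹ * Real.log 2 ^ 2 * Real.log 2 := by field_simp
    _ ≤ (Real.log 2 ^ 3)⁻¹ * Real.log x ^ 2 * Real.log y := by gcongr

/-- There is a constant `C` such that for all `n ≥ 2` and `δ ∈ (0, 1/2)`,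
`rdeg_δ(AND_n) ≤ C · (log n)² · log(1/δ)`. -/
theorem rdeg_AND_le : ∃ C : ℝ, ∀ n : ℕ, 2 ≤ n → ∀ δ : ℝ, 0 < δ → δ < 1/2 →
    (rdeg δ (ANDb n) : ℝ) ≤ C * (Real.log n) ^ 2 * Real.log (1 / δ) := by
  refine ⟨(Real.log 2 ^ 3)⁻¹, fun n hn δ hδ hδ' => ?_⟩
  exact (Nat.cast_le_one.2 (rdeg_AND_le_general n hδ)).trans
    (one_le_inv_log_two_pow_three_mul (by exact_mod_cast hn) ((le_one_div two_pos hδ).2 hδ'.le))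
end
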